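/- Let n ≥ 4, let P_n be the path graph on [n] with edges {i, i+1} for i = 1,…,n−1, let G = P_n^c be its complement, and let I = I(G) ⊂ S = K[x_1,…,x_n]. Then depth(S/I) = 2, and for every k with 2 ≤ k ≤ ν(G) one has I^{[k]} = 𝔪^{[2k]}, where 𝔪 = (x_1,…,x_n) and 𝔪^{[2k]} is the ideal generated by all squarefree monomials of degree 2k; consequently depth(S/I^{[k]}) = 2k − 1 for 2 ≤ k ≤ ν(G). -/

import Mathlib

open MvPolynomial

section Preamble

variable (K : Type*) [Field K] {σ : Type*} [Fintype σ] [DecidableEq σ]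

/-- A (monic) monomial of the polynomial ring. -/
def IsMonomial (f : MvPolynomial σ K) : Prop :=
  ∃ d : σ →₀ ℕ, f = monomial d 1

/-- An ideal generated by monomials. -/
def IsMonomialIdeal (I : Ideal (MvPolynomial σ K)) : Prop :=
  ∃ A : Set (MvPolynomial σ K), (∀ u ∈ A, IsMonomial K u) ∧ I = Ideal.span A

/-- The unique minimal set of monomial generators `G(I)` of a monomial ideal:
the monomials of `I` that are minimal with respect to divisibility. -/
def minGens (I : Ideal (MvPolynomial σ K)) : Set (MvPolynomial σ K) :=
  {u | IsMonomial K u ∧ u ∈ I ∧ ∀ v, IsMonomial K v → v ∈ I → v ∣ u → v = u}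

/-- A squarefree monomial ideal. -/
def IsSqfreeMonomialIdeal (I : Ideal (MvPolynomial σ K)) : Prop :=
  IsMonomialIdeal K I ∧ ∀ u ∈ minGens K I, Squarefree u

/-- The `k`-th squarefree power `I^{[k]}`: the ideal generated by the squarefree
products of `k` minimal monomial generators of `I`. -/
noncomputable def sqPow (I : Ideal (MvPolynomial σ K)) (k : ℕ) : Ideal (MvPolynomial σ K) :=
  Ideal.span {u | Squarefree u ∧ ∃ l : List (MvPolynomial σ K),
    l.length = k ∧ (∀ f ∈ l, f ∈ minGens K I) ∧ u = l.prod}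

/-- `ν(I)`: the maximum length of a regular sequence of monomials in `I`. -/
noncomputable def monNu (I : Ideal (MvPolynomial σ K)) : ℕ :=
  sSup {m | ∃ l : List (MvPolynomial σ K), l.length = m ∧
    (∀ f ∈ l, IsMonomial K f ∧ f ∈ I) ∧
    RingTheory.Sequence.IsRegular (MvPolynomial σ K) l}

/-- The minimal degree `d` of a minimal monomial generator of `I`
(so `d_k = minDeg (I^{[k]})`). -/
noncomputable def minDeg (I : Ideal (MvPolynomial σ K)) : ℕ :=
  sInf (totalDegree '' minGens K I)

/-- `depth(S/I)`: the maximum length of an `S/I`-regular sequence of elements of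
the graded maximal ideal `(x_1, …, x_n)`. -/
noncomputable def qdepth (I : Ideal (MvPolynomial σ K)) : ℕ :=
  sSup {m | ∃ l : List (MvPolynomial σ K), l.length = m ∧
    (∀ f ∈ l, f ∈ Ideal.span (Set.range (X : σ → MvPolynomial σ K))) ∧
    RingTheory.Sequence.IsRegular (MvPolynomial σ K ⧸ I) l}

/-- `I` has linear quotients with respect to the ordering `L` of its minimal
monomial generators: each successive colon ideal is generated by variables. -/
def HasLinearQuotientsOrder (I : Ideal (MvPolynomial σ K))
    (L : List (MvPolynomial σ K)) : Prop :=
  L.Nodup ∧ (∀ u, u ∈ L ↔ u ∈ minGens K I) ∧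
  ∀ i : Fin L.length, 0 < (i : ℕ) →
    ∃ A : Set σ,
      Submodule.colon (Ideal.span {u | u ∈ L.take (i : ℕ)}) (Ideal.span {L.get i})
        = Ideal.span (X '' A)

/-- A monomial ideal with linear quotients. -/
def HasLinearQuotients (I : Ideal (MvPolynomial σ K)) : Prop :=
  ∃ L, HasLinearQuotientsOrder K I L

/-- A polymatroidal ideal: a monomial ideal generated in a single degree whose
minimal generators satisfy the exchange property. -/
def IsPolymatroidal (I : Ideal (MvPolynomial σ K)) : Prop :=
  IsMonomialIdeal K I ∧
  (∃ d, ∀ u ∈ minGens K I, totalDegree u = d) ∧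
  ∀ u ∈ minGens K I, ∀ v ∈ minGens K I, ∀ k : σ,
    degreeOf k v < degreeOf k u →
    ∃ l : σ, degreeOf l u < degreeOf l v ∧
      ∃ w, u = X k * w ∧ X l * w ∈ minGens K I

/-- A matroidal ideal: a polymatroidal ideal all of whose minimal generators are
squarefree. -/
def IsMatroidal (I : Ideal (MvPolynomial σ K)) : Prop :=
  IsPolymatroidal K I ∧ ∀ u ∈ minGens K I, Squarefree u

/-- The squarefree part of a monomial ideal: the ideal generated by its squarefree
minimal generators. -/
noncomputable def sqfPart (I : Ideal (MvPolynomial σ K)) : Ideal (MvPolynomial σ K) :=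
  Ideal.span {u | u ∈ minGens K I ∧ Squarefree u}

/-- The squarefree Veronese ideal `𝔪^{[d]}`, generated by all squarefree
monomials of degree `d`. -/
noncomputable def veronese (d : ℕ) : Ideal (MvPolynomial σ K) :=
  Ideal.span {u | ∃ F : Finset σ, F.card = d ∧ u = ∏ i ∈ F, X i}

/-- A chordal graph: no induced cycle of length greater than 3. -/
def IsChordal {V : Type*} (G : SimpleGraph V) : Prop :=
  ∀ m : ℕ, 4 ≤ m → ¬ ∃ f : ZMod m → V, Function.Injective f ∧
    ∀ i j : ZMod m, G.Adj (f i) (f j) ↔ (i = j + 1 ∨ j = i + 1)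

/-- A matching of `G`: a finite set of pairwise vertex-disjoint edges of `G`. -/
def IsMatching (G : SimpleGraph σ) (M : Finset (Sym2 σ)) : Prop :=
  (↑M ⊆ G.edgeSet) ∧ (M : Set (Sym2 σ)).Pairwise fun e f => ∀ v, v ∈ e → v ∉ f

/-- A `k`-matching of `G`. -/
def IsKMatching (G : SimpleGraph σ) (M : Finset (Sym2 σ)) (k : ℕ) : Prop :=
  IsMatching G M ∧ M.card = k

/-- The vertex set `V(M)` of a matching. -/
def mVerts (M : Finset (Sym2 σ)) : Finset σ :=
  Finset.univ.filter fun v => ∃ e ∈ M, v ∈ e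

/-- The squarefree monomial `∏_{v ∈ V(M)} x_v` attached to a matching. -/
noncomputable def matchMon (M : Finset (Sym2 σ)) : MvPolynomial σ K :=
  ∏ v ∈ mVerts M, X v

/-- The edge ideal `I(G)` of a finite simple graph `G`. -/
noncomputable def edgeIdeal (G : SimpleGraph σ) : Ideal (MvPolynomial σ K) :=
  Ideal.span {u | ∃ i j, G.Adj i j ∧ u = X i * X j}

/-- The `k`-th squarefree power `I(G)^{[k]}` of the edge ideal, generated by the
monomials `∏_{v ∈ V(M)} x_v` of the `k`-matchings `M` of `G`. -/
noncomputable def matchPow (G : SimpleGraph σ) (k : ℕ) : Ideal (MvPolynomial σ K) :=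
  Ideal.span {u | ∃ M : Finset (Sym2 σ), IsKMatching G M k ∧ u = matchMon K M}

/-- The matching number `ν(G)`. -/
noncomputable def matchNum (G : SimpleGraph σ) : ℕ :=
  sSup {k | ∃ M : Finset (Sym2 σ), IsKMatching G M k}

end Preamble

/-!
Both families of ideals are Stanley–Reisner ideals of vertex decomposable complexes: `I(Pₙᶜ)`
belongs to the clique complex of `Pₙ`, which is grown from an edge by adding leaves, and `𝔪^{[d]}`
belongs to a skeleton of a simplex. If `Δ` is vertex decomposable with facets of cardinality `r`,
then the elementary symmetric polynomials `e_r, …, e_1` form a regular sequence on `S/I_Δ`: the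
exact sequence `0 → S/(I_Δ : xⱼ) → S/I_Δ → S/(I_Δ + xⱼ) → 0`, whose outer terms belong to the closed
star and the deletion of `j`, reduces this to simplices. On the simplex with vertex set `B` of
cardinality `r`, `e_r` is the nonzerodivisor `∏_{i ∈ B} xᵢ`, and dividing by it leaves the boundary
of the simplex, which is vertex decomposable with facets of cardinality `r - 1`. Since
`dim S/I_Δ ≤ r`, the depth equals `r`. Finally, any `2k` vertices of `Pₙᶜ` with `k ≥ 2` have a
perfect matching pairing the `i`-th with the `(i + k)`-th: another of the `2k` vertices lies between
the two, so they are not neighbours in `Pₙ`.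
-/

open RingTheory.Sequence

section CommutativeAlgebra

variable {R : Type*} [CommRing R]

theorem isWeaklyRegular_of_exact {M M' M'' : Type*} [AddCommGroup M] [AddCommGroup M']
    [AddCommGroup M''] [Module R M] [Module R M'] [Module R M''] {f : M →ₗ[R] M'} {g : M' →ₗ[R] M''}
    (hf : Function.Injective f) (hfg : Function.Exact f g) (hg : Function.Surjective g)
    {rs : List R} (hM : IsWeaklyRegular M rs) (hM'' : IsWeaklyRegular M'' rs) :
    IsWeaklyRegular M' rs := by
  induction rs generalizing M M' M'' with
  | nil => exact IsWeaklyRegular.nil _ _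
  | cons r rs ih =>
    rw [isWeaklyRegular_cons_iff] at hM hM'' ⊢
    have zero_exact : Function.Exact (0 : M →ₗ[R] M) f :=
      (LinearMap.exact_zero_iff_injective M f).2 hf
    have map_injective : Function.Injective (QuotSMulTop.map r f) := by
      have map_exact := QuotSMulTop.map_first_exact_on_four_term_exact_of_isSMulRegular_last
        zero_exact hfg hM''.1
      rw [map_zero] at map_exact
      exact (LinearMap.exact_zero_iff_injective _ _).1 map_exact
    exact ⟨isSMulRegular_of_range_eq_ker hf (LinearMap.exact_iff.1 hfg).symm hM.1 hM''.1,
      ih map_injective (QuotSMulTop.map_exact r hfg hg) (QuotSMulTop.map_surjective r hg)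
        hM.2 hM''.2⟩

theorem isWeaklyRegular_quotient_of_colon_of_sup {I : Ideal R} (x : R) {rs : List R}
    (hcolon : IsWeaklyRegular (R ⧸ I.colon {x}) rs)
    (hsup : IsWeaklyRegular (R ⧸ (I ⊔ Ideal.span {x})) rs) : IsWeaklyRegular (R ⧸ I) rs := by
  have colon_eq : I.colon {x} = Submodule.comap (LinearMap.toSpanSingleton R R x) I := by
    ext
    simp only [Submodule.mem_colon_singleton, Submodule.mem_comap, LinearMap.toSpanSingleton_apply]
  refine isWeaklyRegular_of_exact
    (f := Submodule.mapQ _ _ (LinearMap.toSpanSingleton R R x) colon_eq.le)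
    (g := Submodule.factor le_sup_left) ?_ ?_ (Submodule.factor_surjective _) hcolon hsup
  · rw [← LinearMap.ker_eq_bot, Submodule.ker_mapQ, ← colon_eq, Submodule.mkQ_map_self]
  · rw [LinearMap.exact_iff, Submodule.factor, Submodule.ker_mapQ, Submodule.comap_id,
      Submodule.map_sup, Submodule.mkQ_map_self, bot_sup_eq, Submodule.range_mapQ,
      LinearMap.range_toSpanSingleton, Ideal.submodule_span_eq]

theorem smul_top_quotient_eq_map_mkQ (I J : Ideal R) :
    J • (⊤ : Submodule R (R ⧸ I)) = Submodule.map I.mkQ J := by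
  rw [← Submodule.range_mkQ I, LinearMap.range_eq_map, ← Submodule.map_smul'', smul_eq_mul,
    Ideal.mul_top]

open scoped Pointwise in
theorem isWeaklyRegular_quotient_cons {I : Ideal R} {r : R} {rs : List R}
    (hcolon : I.colon {r} ≤ I) (hrs : IsWeaklyRegular (R ⧸ (I ⊔ Ideal.span {r})) rs) :
    IsWeaklyRegular (R ⧸ I) (r :: rs) := by
  refine (isWeaklyRegular_cons_iff _ _ _).2 ⟨?_, ?_⟩
  · rw [isSMulRegular_quotient_iff_mem_of_smul_mem]
    intro y hy
    exact hcolon (Submodule.mem_colon_singleton.2 (by rwa [smul_eq_mul, mul_comm]))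
  · have smul_top_eq : r • (⊤ : Submodule R (R ⧸ I)) = Submodule.map I.mkQ (Ideal.span {r}) := by
      rw [← Submodule.ideal_span_singleton_smul, smul_top_quotient_eq_map_mkQ]
    exact ((Submodule.quotEquivOfEq _ _ smul_top_eq ≪≫ₗ
      Submodule.quotientQuotientEquivQuotientSup I (Ideal.span {r})).isWeaklyRegular_congr rs).2 hrs

theorem colon_singleton_eq_of_sub_mem {I : Ideal R} {x y : R} (h : x - y ∈ I) :
    I.colon {x} = I.colon {y} := by
  ext z
  simp only [Submodule.mem_colon_singleton, smul_eq_mul]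
  have mul_sub_mem : z * x - z * y ∈ I := mul_sub z x y ▸ I.mul_mem_left z h
  exact ⟨fun hx ↦ (Submodule.sub_mem_iff_right I hx).1 mul_sub_mem,
    fun hy ↦ (Submodule.sub_mem_iff_left I hy).1 mul_sub_mem⟩

theorem sup_span_singleton_eq_of_sub_mem {I : Ideal R} {x y : R} (h : x - y ∈ I) :
    I ⊔ Ideal.span {x} = I ⊔ Ideal.span {y} := by
  have sup_le_sup {x y : R} (h : x - y ∈ I) : I ⊔ Ideal.span {x} ≤ I ⊔ Ideal.span {y} := by
    refine sup_le le_sup_left ((Ideal.span_singleton_le_iff_mem _).2 ?_)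
    rw [← sub_add_cancel x y]
    exact Submodule.add_mem_sup h (Ideal.mem_span_singleton_self y)
  exact (sup_le_sup h).antisymm (sup_le_sup (neg_sub x y ▸ neg_mem h))

theorem isRegular_quotient_of_le {I J : Ideal R} (hJ : J ≠ ⊤) (hI : I ≤ J) {rs : List R}
    (hrs : ∀ r ∈ rs, r ∈ J) (h : IsWeaklyRegular (R ⧸ I) rs) : IsRegular (R ⧸ I) rs := by
  refine ⟨h, fun top_eq ↦ hJ ?_⟩
  have sup_eq_top : I ⊔ Ideal.ofList rs = ⊤ := by
    rw [← Submodule.map_mkQ_eq_top, ← smul_top_quotient_eq_map_mkQ, ← top_eq]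
  exact top_le_iff.1 (sup_eq_top.ge.trans (sup_le hI (Ideal.span_le.2 hrs)))

theorem length_le_supportDim_of_isRegular [IsNoetherianRing R] {M : Type*} [AddCommGroup M]
    [Module R M] [Module.Finite R M] {rs : List R} (h : IsRegular M rs) :
    (rs.length : WithBot ℕ∞) ≤ Module.supportDim R M := by
  induction rs generalizing M with
  | nil =>
    have := h.nontrivial
    have support_nonempty := Module.nonempty_support_of_nontrivial (R := R) (M := M)
    exact Order.krullDim_nonneg_iff.2 support_nonempty.to_subtype
  | cons r rs ih =>
    rw [isRegular_cons_iff] at h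
    calc ((r :: rs).length : WithBot ℕ∞) = rs.length + 1 := by simp
      _ ≤ Module.supportDim R (QuotSMulTop r M) + 1 := by gcongr; exact ih h.2
      _ ≤ Module.supportDim R M :=
        Module.supportDim_quotSMulTop_succ_le_of_notMem_minimalPrimes
          fun _ ↦ h.1.notMem_of_mem_minimalPrimes

theorem ringKrullDim_quotient_le_of_forall_isPrime {I : Ideal R} {d : WithBot ℕ∞}
    (h : ∀ P : Ideal R, P.IsPrime → I ≤ P → ringKrullDim (R ⧸ P) ≤ d) :
    ringKrullDim (R ⧸ I) ≤ d := by
  rw [ringKrullDim_quotient]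
  refine iSup_le fun p ↦ le_trans ?_ (h p.head.1.asIdeal p.head.1.isPrime p.head.2)
  rw [ringKrullDim_quotient]
  exact le_iSup_of_le
    { length := p.length
      toFun := fun i ↦ ⟨(p i).1, (p.head_le i : p.head ≤ p i)⟩
      step := p.step } le_rfl

end CommutativeAlgebra

section StanleyReisner

variable {R σ : Type*} [CommRing R]

theorem prod_X_eq_monomial (F : Finset σ) :
    (∏ i ∈ F, X i : MvPolynomial σ R) = monomial (∑ i ∈ F, Finsupp.single i 1) 1 :=
  (monomial_sum_one F fun i ↦ Finsupp.single i 1).symm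

theorem support_sum_single_one (F : Finset σ) :
    (∑ i ∈ F, Finsupp.single i 1 : σ →₀ ℕ).support = F := by
  classical
  ext i
  simp [Finsupp.finsetSum_apply, Finsupp.single_apply]

theorem sum_single_one_le_iff {F : Finset σ} {m : σ →₀ ℕ} :
    ∑ i ∈ F, Finsupp.single i 1 ≤ m ↔ F ⊆ m.support := by
  classical
  refine ⟨fun h ↦ support_sum_single_one F ▸ Finsupp.support_mono h, fun h i ↦ ?_⟩
  by_cases hi : i ∈ F
  · simpa [Finsupp.finsetSum_apply, Finsupp.single_apply, hi, Nat.one_le_iff_ne_zero] using h hi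
  · simp [Finsupp.finsetSum_apply, Finsupp.single_apply, hi]

variable (R) in
/-- The squarefree monomial ideal generated by the products `∏ i ∈ F, X i` with `F ∈ S`; edge ideals
and squarefree Veronese ideals are of this form. -/
noncomputable def sqfreeIdeal (S : Set (Finset σ)) : Ideal (MvPolynomial σ R) :=
  Ideal.span ((fun F ↦ ∏ i ∈ F, X i) '' S)

theorem mem_sqfreeIdeal {S : Set (Finset σ)} {f : MvPolynomial σ R} :
    f ∈ sqfreeIdeal R S ↔ ∀ m ∈ f.support, ∃ F ∈ S, F ⊆ m.support := by
  have image_eq : (fun F ↦ ∏ i ∈ F, (X i : MvPolynomial σ R)) '' S =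
      (fun m ↦ monomial m 1) '' ((fun F ↦ ∑ i ∈ F, Finsupp.single i 1) '' S) := by
    simp only [Set.image_image, prod_X_eq_monomial]
  rw [sqfreeIdeal, image_eq, mem_ideal_span_monomial_image]
  simp only [Set.exists_mem_image, sum_single_one_le_iff]

variable (R) in
/-- The Stanley–Reisner ideal of a simplicial complex, generated by the monomials of its nonfaces.
Simplicial complexes are encoded as lower sets of finsets, so that the void complex and the complex
whose only face is `∅` are distinct, and elements of `σ` need not be vertices. -/
noncomputable def stanleyReisnerIdeal (Δ : LowerSet (Finset σ)) : Ideal (MvPolynomial σ R) :=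
  sqfreeIdeal R (Δ : Set (Finset σ))ᶜ

variable {Δ : LowerSet (Finset σ)}

theorem mem_stanleyReisnerIdeal {f : MvPolynomial σ R} :
    f ∈ stanleyReisnerIdeal R Δ ↔ ∀ m ∈ f.support, m.support ∉ Δ := by
  rw [stanleyReisnerIdeal, mem_sqfreeIdeal]
  refine forall₂_congr fun m _ ↦ ⟨?_, fun hm ↦ ⟨_, hm, Finset.Subset.refl _⟩⟩
  rintro ⟨F, hF, hFm⟩ hm
  exact hF (Δ.lower hFm hm)

theorem sqfreeIdeal_eq_stanleyReisnerIdeal {S : Set (Finset σ)}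
    (h : ∀ s, s ∉ Δ ↔ ∃ F ∈ S, F ⊆ s) : sqfreeIdeal R S = stanleyReisnerIdeal R Δ := by
  ext f
  simp only [mem_sqfreeIdeal, mem_stanleyReisnerIdeal, h]

theorem prod_X_mem_stanleyReisnerIdeal {F : Finset σ} (hF : F ∉ Δ) :
    (∏ i ∈ F, X i : MvPolynomial σ R) ∈ stanleyReisnerIdeal R Δ :=
  Ideal.subset_span ⟨F, hF, rfl⟩

theorem prod_X_mem_idealOfVars {F : Finset σ} (hF : F.Nonempty) :
    ∏ i ∈ F, X i ∈ idealOfVars σ R := by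
  obtain ⟨i, hi⟩ := hF
  exact Ideal.mem_of_dvd _ (Finset.dvd_prod_of_mem _ hi) (Ideal.subset_span ⟨i, rfl⟩)

theorem stanleyReisnerIdeal_le_idealOfVars (h : ∅ ∈ Δ) :
    stanleyReisnerIdeal R Δ ≤ idealOfVars σ R := by
  rw [stanleyReisnerIdeal, sqfreeIdeal, Ideal.span_le]
  rintro _ ⟨F, hF, rfl⟩
  exact prod_X_mem_idealOfVars (Finset.nonempty_iff_ne_empty.2 fun hempty ↦ hF (hempty ▸ h))

/-- The closed star of `F` in `Δ`: the faces `s` such that `s ∪ F` is again a face.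
It corresponds to the colon ideal by the monomial of `F`. -/
def closedStar [DecidableEq σ] (Δ : LowerSet (Finset σ)) (F : Finset σ) : LowerSet (Finset σ) where
  carrier := {s | s ∪ F ∈ Δ}
  lower' _ _ h hs := Δ.lower (Finset.union_subset_union_left h) hs

/-- The deletion of `F` from `Δ`: the faces of `Δ` that do not contain `F`. It corresponds to
adding the monomial of `F` to the Stanley–Reisner ideal. -/
def deletion (Δ : LowerSet (Finset σ)) (F : Finset σ) : LowerSet (Finset σ) where
  carrier := {s | s ∈ Δ ∧ ¬ F ⊆ s}
  lower' _ _ h hs := ⟨Δ.lower h hs.1, fun hF ↦ hs.2 (hF.trans h)⟩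

theorem mem_closedStar [DecidableEq σ] {F s : Finset σ} : s ∈ closedStar Δ F ↔ s ∪ F ∈ Δ := Iff.rfl

theorem mem_deletion {F s : Finset σ} : s ∈ deletion Δ F ↔ s ∈ Δ ∧ ¬ F ⊆ s := Iff.rfl

theorem colon_stanleyReisnerIdeal [DecidableEq σ] (F : Finset σ) :
    (stanleyReisnerIdeal R Δ).colon {∏ i ∈ F, X i} = stanleyReisnerIdeal R (closedStar Δ F) := by
  ext f
  simp only [Submodule.mem_colon_singleton, smul_eq_mul, prod_X_eq_monomial,
    mem_stanleyReisnerIdeal, mem_closedStar]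
  have support_add (m : σ →₀ ℕ) :
      (m + ∑ i ∈ F, Finsupp.single i 1).support = m.support ∪ F := by
    rw [Finsupp.support_add_eq_union, support_sum_single_one]
  refine ⟨fun h m hm ↦ ?_, fun h m hm ↦ ?_⟩
  · rw [← support_add]
    exact h _ (by simpa using hm)
  · rw [mem_support_iff, coeff_mul_monomial'] at hm
    obtain ⟨hle, hm⟩ := ite_ne_right_iff.1 hm
    rw [← tsub_add_cancel_of_le hle, support_add]
    exact h _ (by simpa using hm)

theorem stanleyReisnerIdeal_sup_span (F : Finset σ) :
    stanleyReisnerIdeal R Δ ⊔ Ideal.span {∏ i ∈ F, X i} = stanleyReisnerIdeal R (deletion Δ F) := by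
  have mem_iff (s : Finset σ) :
      s ∉ deletion Δ F ↔ ∃ G ∈ (Δ : Set (Finset σ))ᶜ ∪ {F}, G ⊆ s := by
    rw [mem_deletion, not_and_not_right]
    refine ⟨fun h ↦ ?_, ?_⟩
    · by_cases hs : s ∈ Δ
      · exact ⟨F, Or.inr rfl, h hs⟩
      · exact ⟨s, Or.inl hs, Finset.Subset.refl s⟩
    · rintro ⟨G, hG | rfl, hGs⟩ hs
      · exact absurd (Δ.lower hGs hs) hG
      · exact hGs
  rw [← sqfreeIdeal_eq_stanleyReisnerIdeal mem_iff, stanleyReisnerIdeal, sqfreeIdeal, sqfreeIdeal,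
    Set.image_union, Set.image_singleton, Ideal.span_union]

theorem closedStar_Iic_self [DecidableEq σ] (B : Finset σ) :
    closedStar (LowerSet.Iic B) B = LowerSet.Iic B := by
  ext s
  exact Finset.union_subset_iff.trans (and_iff_left (Finset.Subset.refl B))

theorem deletion_Iic_self (B : Finset σ) : deletion (LowerSet.Iic B) B = LowerSet.Iio B := by
  ext s
  exact (lt_iff_le_not_ge (a := s)).symm

end StanleyReisner

section VertexDecomposable

variable {σ : Type*} [DecidableEq σ]

/-- Pure vertex decomposability, where `r` is the common cardinality of the facets. Closed stars
replace the links of the usual definition: a closed star is a cone over the link, and unlike the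
link its facets still have cardinality `r`. -/
inductive IsVertexDecomposable : ℕ → LowerSet (Finset σ) → Prop
  | simplex (B : Finset σ) : IsVertexDecomposable B.card (LowerSet.Iic B)
  | shed {r : ℕ} {Δ : LowerSet (Finset σ)} (j : σ) :
      IsVertexDecomposable r (closedStar Δ {j}) → IsVertexDecomposable r (deletion Δ {j}) →
      IsVertexDecomposable r Δ

theorem IsVertexDecomposable.empty_mem {r : ℕ} {Δ : LowerSet (Finset σ)}
    (h : IsVertexDecomposable r Δ) : ∅ ∈ Δ := by
  induction h with
  | simplex B => exact Finset.empty_subset B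
  | shed j _ _ _ ih => exact ih.1

theorem IsVertexDecomposable.card_le {r : ℕ} {Δ : LowerSet (Finset σ)}
    (h : IsVertexDecomposable r Δ) {s : Finset σ} (hs : s ∈ Δ) : s.card ≤ r := by
  induction h with
  | simplex B => exact Finset.card_le_card hs
  | shed j _ _ ih_star ih_deletion =>
    by_cases hj : j ∈ s
    · exact ih_star (mem_closedStar.2 (by rwa [Finset.union_eq_left.2 (by simpa)]))
    · exact ih_deletion (mem_deletion.2 ⟨hs, by simpa⟩)

/-- The join of the skeleton of the simplex on `A` whose facets have cardinality `d` with the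
simplex on `B` (for `A` and `B` disjoint). Allowing `B ≠ ∅` makes the family of all skeleta of
simplices closed under closed stars. -/
def skeletonJoinSimplex (A B : Finset σ) (d : ℕ) : LowerSet (Finset σ) where
  carrier := {s | s ⊆ A ∪ B ∧ (s ∩ A).card ≤ d}
  lower' _ _ h hs := ⟨h.trans hs.1,
    (Finset.card_le_card (Finset.inter_subset_inter_right h)).trans hs.2⟩

theorem mem_skeletonJoinSimplex {A B s : Finset σ} {d : ℕ} :
    s ∈ skeletonJoinSimplex A B d ↔ s ⊆ A ∪ B ∧ (s ∩ A).card ≤ d := Iff.rfl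

theorem skeletonJoinSimplex_zero {A B : Finset σ} (h : Disjoint A B) :
    skeletonJoinSimplex A B 0 = LowerSet.Iic B := by
  ext s
  simp only [SetLike.mem_coe, mem_skeletonJoinSimplex, LowerSet.mem_Iic_iff, Nat.le_zero,
    Finset.card_eq_zero, ← Finset.disjoint_iff_inter_eq_empty]
  exact ⟨fun hs ↦ hs.2.left_le_of_le_sup_left hs.1,
    fun hs ↦ ⟨hs.trans Finset.subset_union_right, (h.mono_right hs).symm⟩⟩

theorem skeletonJoinSimplex_card (A B : Finset σ) :
    skeletonJoinSimplex A B A.card = LowerSet.Iic (A ∪ B) := by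
  ext s
  exact and_iff_left (Finset.card_le_card Finset.inter_subset_right)

theorem closedStar_skeletonJoinSimplex {A B : Finset σ} {j : σ} (hj : j ∉ A) (d : ℕ) :
    closedStar (skeletonJoinSimplex (insert j A) B (d + 1)) {j} =
      skeletonJoinSimplex A (insert j B) d := by
  ext s
  have inter_eq : (s ∪ {j}) ∩ insert j A = insert j (s ∩ A) := by grind
  have hj' : j ∉ s ∩ A := by grind
  simp only [SetLike.mem_coe, mem_closedStar, mem_skeletonJoinSimplex, inter_eq,
    Finset.card_insert_of_notMem hj', add_le_add_iff_right]
  grind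

theorem deletion_skeletonJoinSimplex {A B : Finset σ} {j : σ} (hA : j ∉ A) (hB : j ∉ B) (d : ℕ) :
    deletion (skeletonJoinSimplex (insert j A) B d) {j} = skeletonJoinSimplex A B d := by
  ext s
  simp only [SetLike.mem_coe, mem_deletion, mem_skeletonJoinSimplex, Finset.singleton_subset_iff]
  by_cases hs : j ∈ s
  · grind
  · have inter_eq : s ∩ insert j A = s ∩ A := by grind
    grind

theorem isVertexDecomposable_skeletonJoinSimplex {A B : Finset σ} (hAB : Disjoint A B) {d : ℕ}
    (hd : d ≤ A.card) : IsVertexDecomposable (B.card + d) (skeletonJoinSimplex A B d) := by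
  induction A using Finset.induction_on generalizing B d with
  | empty =>
    obtain rfl : d = 0 := by simpa using hd
    rw [skeletonJoinSimplex_zero hAB]
    exact .simplex B
  | insert j A hjA ih =>
    obtain ⟨hjB, hAB'⟩ := Finset.disjoint_insert_left.1 hAB
    rw [Finset.card_insert_of_notMem hjA] at hd
    rcases d.eq_zero_or_pos with rfl | hpos
    · rw [skeletonJoinSimplex_zero hAB]
      exact .simplex B
    obtain rfl | hlt := hd.eq_or_lt
    · rw [← Finset.card_insert_of_notMem hjA, skeletonJoinSimplex_card, add_comm,
        ← Finset.card_union_of_disjoint hAB]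
      exact .simplex _
    obtain ⟨d, rfl⟩ := Nat.exists_eq_add_one.2 hpos
    refine .shed j ?_ ?_
    · have star_rank : (insert j B).card + d = B.card + (d + 1) := by
        rw [Finset.card_insert_of_notMem hjB]; omega
      rw [closedStar_skeletonJoinSimplex hjA, ← star_rank]
      exact ih (Finset.disjoint_insert_right.2 ⟨hjA, hAB'⟩) (by omega)
    · rw [deletion_skeletonJoinSimplex hjA hjB]
      exact ih hAB' (by omega)

theorem isVertexDecomposable_Iio {B : Finset σ} {r : ℕ} (hB : B.card = r + 1) :
    IsVertexDecomposable r (LowerSet.Iio B) := by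
  have Iio_eq : LowerSet.Iio B = skeletonJoinSimplex B ∅ r := by
    ext s
    simp only [SetLike.mem_coe, LowerSet.mem_Iio_iff, mem_skeletonJoinSimplex, Finset.union_empty]
    refine ⟨fun hs ↦ ⟨hs.le, ?_⟩, fun ⟨hsB, hcard⟩ ↦ hsB.lt_of_ne ?_⟩
    · rw [Finset.inter_eq_left.2 hs.le]
      have := Finset.card_lt_card hs
      omega
    · rintro rfl
      rw [Finset.inter_self] at hcard
      omega
  simpa [Iio_eq] using
    isVertexDecomposable_skeletonJoinSimplex (Finset.disjoint_empty_right B) (d := r) (by omega)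

end VertexDecomposable

section RegularSequence

variable {R σ : Type*} [CommRing R] {r : ℕ} {Δ : LowerSet (Finset σ)}

theorem IsVertexDecomposable.isWeaklyRegular_of_forall_Iic [DecidableEq σ]
    (h : IsVertexDecomposable r Δ) {fs : List (MvPolynomial σ R)}
    (hfs : ∀ B : Finset σ, B.card = r →
      IsWeaklyRegular (MvPolynomial σ R ⧸ stanleyReisnerIdeal R (LowerSet.Iic B)) fs) :
    IsWeaklyRegular (MvPolynomial σ R ⧸ stanleyReisnerIdeal R Δ) fs := by
  induction h with
  | simplex B => exact hfs B rfl
  | shed j _ _ ih_star ih_deletion =>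
    refine isWeaklyRegular_quotient_of_colon_of_sup (∏ i ∈ {j}, X i) ?_ ?_
    · rw [colon_stanleyReisnerIdeal]
      exact ih_star hfs
    · rw [stanleyReisnerIdeal_sup_span]
      exact ih_deletion hfs

variable [Fintype σ]

variable (R σ) in
/-- The elementary symmetric polynomials `e_r, …, e_1`, a universal system of parameters for the
Stanley–Reisner rings of complexes whose largest faces have cardinality `r`. -/
noncomputable def esymmSeq : ℕ → List (MvPolynomial σ R)
  | 0 => []
  | r + 1 => esymm σ R (r + 1) :: esymmSeq r

theorem length_esymmSeq (r : ℕ) : (esymmSeq R σ r).length = r := by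
  induction r with
  | zero => rfl
  | succ r ih => rw [esymmSeq, List.length_cons, ih]

theorem esymm_mem_idealOfVars {d : ℕ} (hd : d ≠ 0) : esymm σ R d ∈ idealOfVars σ R := by
  refine sum_mem fun t ht ↦ ?_
  have t_nonempty : t.Nonempty := by
    rw [← Finset.card_pos, (Finset.mem_powersetCard.1 ht).2]
    omega
  exact prod_X_mem_idealOfVars t_nonempty

theorem mem_idealOfVars_of_mem_esymmSeq {f : MvPolynomial σ R} (hf : f ∈ esymmSeq R σ r) :
    f ∈ idealOfVars σ R := by
  induction r with
  | zero => cases hf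
  | succ r ih =>
    rcases List.mem_cons.1 hf with rfl | hf
    · exact esymm_mem_idealOfVars r.succ_ne_zero
    · exact ih hf

theorem esymm_card_sub_prod_X_mem (B : Finset σ) :
    esymm σ R B.card - ∏ i ∈ B, X i ∈ stanleyReisnerIdeal R (LowerSet.Iic B) := by
  classical
  rw [esymm, ← Finset.sum_erase_add _ _ (Finset.mem_powersetCard.2 ⟨Finset.subset_univ B, rfl⟩),
    add_sub_cancel_right]
  refine sum_mem fun t ht ↦ prod_X_mem_stanleyReisnerIdeal fun htB ↦ ?_
  rw [Finset.mem_erase, Finset.mem_powersetCard] at ht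
  exact ht.1 (Finset.eq_of_subset_of_card_le htB ht.2.2.ge)

theorem isWeaklyRegular_esymmSeq_Iic_of_Iio {B : Finset σ} (hB : B.card = r + 1)
    (h : IsWeaklyRegular (MvPolynomial σ R ⧸ stanleyReisnerIdeal R (LowerSet.Iio B))
      (esymmSeq R σ r)) :
    IsWeaklyRegular (MvPolynomial σ R ⧸ stanleyReisnerIdeal R (LowerSet.Iic B))
      (esymmSeq R σ (r + 1)) := by
  classical
  have sub_mem := hB ▸ esymm_card_sub_prod_X_mem (R := R) B
  refine isWeaklyRegular_quotient_cons ?_ ?_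
  · rw [colon_singleton_eq_of_sub_mem sub_mem, colon_stanleyReisnerIdeal, closedStar_Iic_self]
  · rwa [sup_span_singleton_eq_of_sub_mem sub_mem, stanleyReisnerIdeal_sup_span, deletion_Iic_self]

theorem isWeaklyRegular_esymmSeq_Iic {B : Finset σ} (hB : B.card = r) :
    IsWeaklyRegular (MvPolynomial σ R ⧸ stanleyReisnerIdeal R (LowerSet.Iic B))
      (esymmSeq R σ r) := by
  classical
  induction r generalizing B with
  | zero => exact IsWeaklyRegular.nil _ _
  | succ r ih =>
    exact isWeaklyRegular_esymmSeq_Iic_of_Iio hB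
      ((isVertexDecomposable_Iio hB).isWeaklyRegular_of_forall_Iic fun _ ↦ ih)

theorem IsVertexDecomposable.isWeaklyRegular_esymmSeq [DecidableEq σ]
    (h : IsVertexDecomposable r Δ) :
    IsWeaklyRegular (MvPolynomial σ R ⧸ stanleyReisnerIdeal R Δ) (esymmSeq R σ r) :=
  h.isWeaklyRegular_of_forall_Iic fun _ ↦ isWeaklyRegular_esymmSeq_Iic

end RegularSequence

section Depth

variable {K σ : Type*} [Field K]

theorem idealOfVars_ne_top : idealOfVars σ K ≠ ⊤ := by
  rw [Ideal.ne_top_iff_one]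
  simpa using C_mem_pow_idealOfVars_iff (σ := σ) 1 (1 : K)

theorem ringKrullDim_mvPolynomial_quotient_le_card {I : Ideal (MvPolynomial σ K)} {B : Finset σ}
    (h : ∀ i ∉ B, X i ∈ I) : ringKrullDim (MvPolynomial σ K ⧸ I) ≤ B.card := by
  have surjective : Function.Surjective
      (aeval fun i : B ↦ Ideal.Quotient.mkₐ K I (X i.1) : MvPolynomial B K →ₐ[K] _) := by
    rw [← AlgHom.range_eq_top, eq_top_iff,
      ← (AlgHom.range_eq_top _).2 (Ideal.Quotient.mkₐ_surjective K I), ← Algebra.map_top,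
      ← adjoin_range_X, AlgHom.map_adjoin, Algebra.adjoin_le_iff]
    rintro _ ⟨_, ⟨i, rfl⟩, rfl⟩
    by_cases hi : i ∈ B
    · exact ⟨X ⟨i, hi⟩, by simp⟩
    · exact ⟨0, by simpa using (Ideal.Quotient.eq_zero_iff_mem.2 (h i hi)).symm⟩
  calc ringKrullDim (MvPolynomial σ K ⧸ I) ≤ ringKrullDim (MvPolynomial B K) :=
        ringKrullDim_le_of_surjective _ surjective
    _ = B.card := by
        rw [MvPolynomial.ringKrullDim_of_isNoetherianRing, ringKrullDim_eq_zero_of_field, zero_add,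
          Nat.card_eq_fintype_card, Fintype.card_coe]

variable [Finite σ] {r : ℕ} {Δ : LowerSet (Finset σ)}

theorem ringKrullDim_quotient_stanleyReisnerIdeal_le (h : ∀ s ∈ Δ, s.card ≤ r) :
    ringKrullDim (MvPolynomial σ K ⧸ stanleyReisnerIdeal K Δ) ≤ r := by
  classical
  cases nonempty_fintype σ
  refine ringKrullDim_quotient_le_of_forall_isPrime fun P hP hle ↦ ?_
  let B : Finset σ := Finset.univ.filter fun i ↦ X i ∉ P
  have B_mem : B ∈ Δ := by
    by_contra hB
    obtain ⟨i, hi, hiP⟩ := hP.prod_mem_iff.1 (hle (prod_X_mem_stanleyReisnerIdeal hB))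
    exact (Finset.mem_filter.1 hi).2 hiP
  calc ringKrullDim (MvPolynomial σ K ⧸ P) ≤ B.card :=
        ringKrullDim_mvPolynomial_quotient_le_card fun i hi ↦ by simpa [B] using hi
    _ ≤ r := by exact_mod_cast h B B_mem

theorem IsVertexDecomposable.qdepth_stanleyReisnerIdeal [DecidableEq σ]
    (h : IsVertexDecomposable r Δ) : qdepth K (stanleyReisnerIdeal K Δ) = r := by
  cases nonempty_fintype σ
  refine IsGreatest.csSup_eq ⟨⟨esymmSeq K σ r, length_esymmSeq r,
    fun _ ↦ mem_idealOfVars_of_mem_esymmSeq, ?_⟩, ?_⟩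
  · exact isRegular_quotient_of_le idealOfVars_ne_top
      (stanleyReisnerIdeal_le_idealOfVars h.empty_mem)
      (fun _ ↦ mem_idealOfVars_of_mem_esymmSeq) h.isWeaklyRegular_esymmSeq
  · rintro _ ⟨fs, rfl, -, hfs⟩
    have length_le := (length_le_supportDim_of_isRegular hfs).trans_eq
      (Module.supportDim_quotient_eq_ringKrullDim _)
    exact_mod_cast length_le.trans
      (ringKrullDim_quotient_stanleyReisnerIdeal_le fun _ ↦ h.card_le)

end Depth

section Veronese

variable {K σ : Type*} [Field K] [Fintype σ]

theorem veronese_succ_eq_stanleyReisnerIdeal [DecidableEq σ] (d : ℕ) :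
    veronese K (d + 1) =
      stanleyReisnerIdeal K (skeletonJoinSimplex (Finset.univ : Finset σ) ∅ d) := by
  have veronese_eq : veronese K (d + 1) = sqfreeIdeal K {F : Finset σ | F.card = d + 1} := by
    simp only [veronese, sqfreeIdeal, Set.image, Set.mem_ofPred_eq, eq_comm]
  rw [veronese_eq]
  refine sqfreeIdeal_eq_stanleyReisnerIdeal fun s ↦ ?_
  have not_mem_iff : s ∉ skeletonJoinSimplex Finset.univ ∅ d ↔ d + 1 ≤ s.card := by
    simp [mem_skeletonJoinSimplex]
  rw [not_mem_iff, Finset.le_card_iff_exists_subset_card]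
  exact exists_congr fun F ↦ and_comm

theorem qdepth_veronese_succ {d : ℕ} (hd : d ≤ Fintype.card σ) :
    qdepth K (veronese K (d + 1) : Ideal (MvPolynomial σ K)) = d := by
  classical
  rw [veronese_succ_eq_stanleyReisnerIdeal,
    (isVertexDecomposable_skeletonJoinSimplex (Finset.disjoint_empty_right _)
      hd).qdepth_stanleyReisnerIdeal, Finset.card_empty, zero_add]

end Veronese

section CliqueComplex

variable {σ : Type*} {G : SimpleGraph σ} {W : Finset σ}

/-- The simplicial complex of the cliques of `G` contained in the vertex set `W`, which is allowed
to vary so that graphs can be grown one vertex at a time. -/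
def cliqueComplex (G : SimpleGraph σ) (W : Finset σ) : LowerSet (Finset σ) where
  carrier := {s | s ⊆ W ∧ G.IsClique (s : Set σ)}
  lower' _ _ h hs := ⟨h.trans hs.1, hs.2.subset h⟩

theorem mem_cliqueComplex {s : Finset σ} :
    s ∈ cliqueComplex G W ↔ s ⊆ W ∧ G.IsClique (s : Set σ) := Iff.rfl

theorem cliqueComplex_eq_Iic (h : G.IsClique (W : Set σ)) :
    cliqueComplex G W = LowerSet.Iic W := by
  ext s
  exact and_iff_left_of_imp fun hs ↦ h.subset hs

theorem edgeIdeal_compl_eq_stanleyReisnerIdeal {K : Type*} [Field K] [Fintype σ] :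
    edgeIdeal K Gᶜ = stanleyReisnerIdeal K (cliqueComplex G Finset.univ) := by
  classical
  have edgeIdeal_eq : edgeIdeal K Gᶜ = sqfreeIdeal K {F | ∃ i j, Gᶜ.Adj i j ∧ F = {i, j}} := by
    rw [edgeIdeal, sqfreeIdeal]
    congr 1
    ext u
    constructor
    · rintro ⟨i, j, hij, rfl⟩
      exact ⟨{i, j}, ⟨i, j, hij, rfl⟩, Finset.prod_pair hij.ne⟩
    · rintro ⟨_, ⟨i, j, hij, rfl⟩, rfl⟩
      exact ⟨i, j, hij, Finset.prod_pair hij.ne⟩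
  rw [edgeIdeal_eq]
  refine sqfreeIdeal_eq_stanleyReisnerIdeal fun s ↦ ?_
  simp only [mem_cliqueComplex, Finset.subset_univ, true_and, SimpleGraph.isClique_iff,
    Set.Pairwise, SimpleGraph.compl_adj]
  push Not
  constructor
  · rintro ⟨i, hi, j, hj, hne, hij⟩
    exact ⟨{i, j}, ⟨i, j, ⟨hne, hij⟩, rfl⟩, by simp_all [Finset.insert_subset_iff]⟩
  · rintro ⟨_, ⟨i, j, ⟨hne, hij⟩, rfl⟩, hs⟩
    exact ⟨i, hs (by simp), j, hs (by simp), hne, hij⟩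

variable [DecidableEq σ]

theorem closedStar_cliqueComplex_insert_of_unique_adj {j p : σ} (hp : p ∈ W)
    (hadj : ∀ i ∈ W, G.Adj j i ↔ i = p) :
    closedStar (cliqueComplex G (insert j W)) {j} = LowerSet.Iic {j, p} := by
  have isClique_pair : G.IsClique (({j, p} : Finset σ) : Set σ) := by
    simpa [SimpleGraph.isClique_pair] using fun _ ↦ (hadj p hp).2 rfl
  ext s
  simp only [SetLike.mem_coe, mem_closedStar, mem_cliqueComplex, LowerSet.mem_Iic_iff]
  constructor
  · rintro ⟨hs, hclique⟩ i hi
    by_cases hij : i = j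
    · simp [hij]
    · have hiW : i ∈ W :=
        Finset.mem_of_mem_insert_of_ne (hs (Finset.mem_union_left _ hi)) hij
      have adj : G.Adj j i := hclique (by simp) (by simp [hi]) (Ne.symm hij)
      simp [(hadj i hiW).1 adj]
  · intro hs
    have union_subset : s ∪ {j} ⊆ {j, p} := Finset.union_subset hs (by simp)
    exact ⟨union_subset.trans (by grind), isClique_pair.subset (by exact_mod_cast union_subset)⟩

theorem deletion_cliqueComplex_insert {j : σ} (hj : j ∉ W) :
    deletion (cliqueComplex G (insert j W)) {j} = cliqueComplex G W := by
  ext s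
  simp only [SetLike.mem_coe, mem_deletion, mem_cliqueComplex, Finset.singleton_subset_iff]
  grind

theorem IsVertexDecomposable.cliqueComplex_insert_of_unique_adj {j p : σ} (hj : j ∉ W) (hp : p ∈ W)
    (hadj : ∀ i ∈ W, G.Adj j i ↔ i = p) (h : IsVertexDecomposable 2 (cliqueComplex G W)) :
    IsVertexDecomposable 2 (cliqueComplex G (insert j W)) := by
  refine .shed j ?_ ?_
  · rw [closedStar_cliqueComplex_insert_of_unique_adj hp hadj,
      ← Finset.card_pair (ne_of_mem_of_not_mem hp hj).symm]
    exact .simplex _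
  · rwa [deletion_cliqueComplex_insert hj]

end CliqueComplex

section Matching

variable {σ : Type*} [Fintype σ] {G : SimpleGraph σ}

theorem IsKMatching.card_mVerts [DecidableEq σ] {M : Finset (Sym2 σ)} {k : ℕ}
    (h : IsKMatching G M k) : (mVerts M).card = 2 * k := by
  have mVerts_eq : mVerts M = M.biUnion Sym2.toFinset := by
    ext v
    simp [mVerts]
  have card_toFinset (e : Sym2 σ) (he : e ∈ M) : e.toFinset.card = 2 :=
    Sym2.card_toFinset_of_not_isDiag e (G.not_isDiag_of_mem_edgeSet (h.1.1 he))
  have disjoint : (M : Set (Sym2 σ)).PairwiseDisjoint Sym2.toFinset := fun e he f hf hef ↦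
    Finset.disjoint_left.2 fun v hve hvf ↦
      h.1.2 he hf hef v (Sym2.mem_toFinset.1 hve) (Sym2.mem_toFinset.1 hvf)
  rw [mVerts_eq, Finset.card_biUnion disjoint, Finset.sum_const_nat card_toFinset, h.2, mul_comm]

theorem two_mul_matchNum_le_card (G : SimpleGraph σ) : 2 * matchNum G ≤ Fintype.card σ := by
  classical
  have matchNum_le : matchNum G ≤ Fintype.card σ / 2 := by
    refine csSup_le' ?_
    rintro k ⟨M, hM⟩
    have := hM.card_mVerts ▸ Finset.card_le_univ (mVerts M)
    omega
  omega

variable [DecidableEq σ]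

theorem exists_isKMatching_of_injective_sum {ι : Type*} [Fintype ι] {f : ι ⊕ ι → σ}
    (hf : Function.Injective f) (hadj : ∀ i, G.Adj (f (.inl i)) (f (.inr i))) :
    ∃ M, IsKMatching G M (Fintype.card ι) ∧ mVerts M = Finset.univ.image f := by
  let edge (i : ι) : Sym2 σ := s(f (.inl i), f (.inr i))
  have edge_eq_of_mem {i j : ι} {v : σ} (hi : v ∈ edge i) (hj : v ∈ edge j) : i = j := by
    rcases Sym2.mem_iff.1 hi with rfl | rfl <;> rcases Sym2.mem_iff.1 hj with h | h <;>
      simpa using hf h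
  have edge_injective : Function.Injective edge := fun i j hij ↦
    edge_eq_of_mem (Sym2.mem_mk_left _ _) (hij ▸ Sym2.mem_mk_left _ _)
  refine ⟨Finset.univ.image edge, ⟨⟨?_, ?_⟩, ?_⟩, ?_⟩
  · simpa [Set.range_subset_iff, edge] using hadj
  · simp only [Finset.coe_image, Finset.coe_univ, Set.image_univ]
    rintro _ ⟨i, rfl⟩ _ ⟨j, rfl⟩ hne v hvi hvj
    exact hne (congrArg edge (edge_eq_of_mem hvi hvj))
  · rw [Finset.card_image_of_injective _ edge_injective, Finset.card_univ]
  · ext v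
    simp [mVerts, edge, eq_comm, exists_or]

theorem matchPow_eq_veronese {K : Type*} [Field K] {k : ℕ}
    (h : ∀ F : Finset σ, F.card = 2 * k → ∃ M, IsKMatching G M k ∧ mVerts M = F) :
    matchPow K G k = veronese K (2 * k) := by
  rw [matchPow, veronese]
  congr 1
  ext u
  constructor
  · rintro ⟨M, hM, rfl⟩
    exact ⟨mVerts M, hM.card_mVerts, rfl⟩
  · rintro ⟨F, hF, rfl⟩
    obtain ⟨M, hM, rfl⟩ := h F hF
    exact ⟨M, hM, rfl⟩

end Matching

section Path

open SimpleGraph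

variable {n : ℕ}

theorem isVertexDecomposable_cliqueComplex_pathGraph {m : ℕ} (hm : 2 ≤ m) (hmn : m ≤ n) :
    IsVertexDecomposable 2 (cliqueComplex (pathGraph n) {i : Fin n | i.val < m}) := by
  induction m, hm using Nat.le_induction with
  | base =>
    have firstTwo : ({i : Fin n | i.val < 2} : Finset (Fin n)) =
        {⟨0, by omega⟩, ⟨1, by omega⟩} := by
      ext i
      simp only [Finset.mem_filter_univ, Finset.mem_insert, Finset.mem_singleton, Fin.ext_iff]
      omega
    have card_eq : ({⟨0, by omega⟩, ⟨1, by omega⟩} : Finset (Fin n)).card = 2 :=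
      Finset.card_pair (by simp)
    rw [firstTwo, cliqueComplex_eq_Iic (by simp [pathGraph_adj]), ← card_eq]
    exact .simplex _
  | succ m hm ih =>
    have insert_eq : ({i : Fin n | i.val < m + 1} : Finset (Fin n)) =
        insert ⟨m, hmn⟩ ({i : Fin n | i.val < m} : Finset (Fin n)) := by
      ext i
      simp only [Finset.mem_filter_univ, Finset.mem_insert, Fin.ext_iff]
      omega
    rw [insert_eq]
    refine (ih (by omega)).cliqueComplex_insert_of_unique_adj (p := ⟨m - 1, by omega⟩)
      (by simp) (by rw [Finset.mem_filter_univ]; dsimp only; omega) fun i hi ↦ ?_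
    have : i.val < m := by simpa using hi
    rw [pathGraph_adj, Fin.ext_iff]
    dsimp only
    omega

theorem qdepth_edgeIdeal_compl_pathGraph {K : Type*} [Field K] (hn : 2 ≤ n) :
    qdepth K (edgeIdeal K (pathGraph n)ᶜ) = 2 := by
  have decomposable := isVertexDecomposable_cliqueComplex_pathGraph hn le_rfl
  rw [edgeIdeal_compl_eq_stanleyReisnerIdeal]
  simpa using decomposable.qdepth_stanleyReisnerIdeal (K := K)

theorem compl_pathGraph_adj_of_lt_of_lt {i j k : Fin n} (hij : i < j) (hjk : j < k) :
    (pathGraph n)ᶜ.Adj i k := by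
  rw [compl_adj, pathGraph_adj]
  omega

theorem exists_isKMatching_compl_pathGraph {k : ℕ} (hk : 2 ≤ k) {F : Finset (Fin n)}
    (hF : F.card = 2 * k) : ∃ M, IsKMatching (pathGraph n)ᶜ M k ∧ mVerts M = F := by
  let e := F.orderEmbOfFin (hF.trans (two_mul k))
  have adj (i : Fin k) : (pathGraph n)ᶜ.Adj (e (Fin.castAdd k i)) (e (Fin.natAdd k i)) := by
    let next : Fin (k + k) := ⟨i + 1, by omega⟩
    have castAdd_lt_next : Fin.castAdd k i < next := Fin.lt_def.2 (Nat.lt_succ_self i)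
    have next_lt_natAdd : next < Fin.natAdd k i := by
      rw [Fin.lt_def, Fin.val_natAdd]
      dsimp only [next]
      omega
    exact compl_pathGraph_adj_of_lt_of_lt (e.strictMono castAdd_lt_next)
      (e.strictMono next_lt_natAdd)
  obtain ⟨M, hM, mVerts_eq⟩ := exists_isKMatching_of_injective_sum
    (f := e ∘ finSumFinEquiv) (e.injective.comp finSumFinEquiv.injective) adj
  rw [Fintype.card_fin] at hM
  refine ⟨M, hM, Finset.eq_of_subset_of_card_le ?_ ?_⟩
  · rw [mVerts_eq, Finset.image_subset_iff]
    exact fun x _ ↦ Finset.orderEmbOfFin_mem F _ _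
  · rw [hF, hM.card_mVerts]

theorem matchPow_compl_pathGraph {K : Type*} [Field K] {k : ℕ} (hk : 2 ≤ k) :
    matchPow K (pathGraph n)ᶜ k = veronese K (2 * k) :=
  matchPow_eq_veronese fun _ ↦ exists_isKMatching_compl_pathGraph hk

end Path

/-- Let `n ≥ 4` and `G = P_n^c` be the complement of the path
graph, with edge ideal `I = I(G)`. Then `depth(S/I) = 2`, and for every
`2 ≤ k ≤ ν(G)` one has `I^{[k]} = 𝔪^{[2k]}` (the squarefree Veronese ideal of
degree `2k`); consequently `depth(S/I^{[k]}) = 2k − 1` for all such `k`. -/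
theorem path_complement_depths {K : Type*} [Field K] (n : ℕ) (hn : 4 ≤ n) :
    qdepth K (edgeIdeal K (SimpleGraph.pathGraph n)ᶜ) = 2 ∧
    ∀ k : ℕ, 2 ≤ k → k ≤ matchNum (SimpleGraph.pathGraph n)ᶜ →
      matchPow K (SimpleGraph.pathGraph n)ᶜ k = veronese K (2 * k) ∧
      qdepth K (matchPow K (SimpleGraph.pathGraph n)ᶜ k) = 2 * k - 1 := by
  refine ⟨qdepth_edgeIdeal_compl_pathGraph (by omega), fun k hk hkν ↦ ?_⟩
  have two_mul_le : 2 * k ≤ n := by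
    simpa using (Nat.mul_le_mul_left 2 hkν).trans (two_mul_matchNum_le_card _)
  have matchPow_eq := matchPow_compl_pathGraph (K := K) (n := n) hk
  refine ⟨matchPow_eq, ?_⟩
  obtain ⟨d, hd⟩ : ∃ d, 2 * k = d + 1 := ⟨2 * k - 1, by omega⟩
  rw [matchPow_eq, hd, Nat.add_sub_cancel]
  exact qdepth_veronese_succ (by rw [Fintype.card_fin]; omega)
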